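/- arXiv:2210.06062 — 2 statements merged into one kernel-verified Lean document; each statement's English description precedes it below -/
import Mathlib

section
/- Let f : ℝ → ℝ be specularly differentiable at x₀ ∈ ℝ. If f is symmetric about x = x₀ in a neighborhood of x₀, i.e., there exists δ > 0 such that f(x₀ − x) = f(x₀ + x) for all x ∈ (−δ, δ), then f^S(x₀) = 0. -/
open Filter Topology Set

/-- The combination function `A(α,β)` from the paper: the slope of the specular
tangent determined by one-sided slopes `α` (right) and `β` (left). -/
noncomputable def specA (α β : ℝ) : ℝ :=
  if α + β = 0 then 0
  else (α * β - 1 + Real.sqrt ((α ^ 2 + 1) * (β ^ 2 + 1))) / (α + β)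

/-- `HasSpecData f x₀ L α β` means: the left and right limits of `f` at `x₀` both
exist and are equal to `L`, the right specular derivative of `f` at `x₀` is `α`,
and the left specular derivative of `f` at `x₀` is `β`. -/
def HasSpecData (f : ℝ → ℝ) (x₀ L α β : ℝ) : Prop :=
  Tendsto f (𝓝[<] x₀) (𝓝 L) ∧ Tendsto f (𝓝[>] x₀) (𝓝 L) ∧
    Tendsto (fun x => (f x - L) / (x - x₀)) (𝓝[>] x₀) (𝓝 α) ∧
    Tendsto (fun x => (f x - L) / (x - x₀)) (𝓝[<] x₀) (𝓝 β)

/-- `f` is specularly differentiable at `x₀`. -/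
def SpecDifferentiableAt (f : ℝ → ℝ) (x₀ : ℝ) : Prop :=
  ∃ L α β, HasSpecData f x₀ L α β

/-- `f` is specularly differentiable at `x₀` with specular derivative `d`. -/
def HasSpecDerivAt (f : ℝ → ℝ) (x₀ d : ℝ) : Prop :=
  ∃ L α β, HasSpecData f x₀ L α β ∧ d = specA α β

/-!
The reflection `x ↦ 2 * x₀ - x` exchanges the two one-sided specular derivatives at `x₀` and
changes their signs. Since `specA` is symmetric and odd, the specular derivative at `x₀` changes
sign as well; a function that agrees with its reflection near `x₀` therefore satisfies `d = -d`.
-/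

section Reflection

variable {R : Type*} [Ring R] [LinearOrder R] [IsOrderedAddMonoid R]
  [TopologicalSpace R] [IsTopologicalAddGroup R]

theorem tendsto_two_mul_sub_nhdsGT (a : R) :
    Tendsto (fun x => 2 * a - x) (𝓝[>] a) (𝓝[<] a) := by
  have h : Tendsto (fun x => 2 * a - x) (𝓝[>] a) (𝓝[<] (2 * a - a)) :=
    map_subLeft_nhdsGT.le
  simpa only [two_mul, add_sub_cancel_right] using h

theorem tendsto_two_mul_sub_nhdsLT (a : R) :
    Tendsto (fun x => 2 * a - x) (𝓝[<] a) (𝓝[>] a) := by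
  have h : Tendsto (fun x => 2 * a - x) (𝓝[<] a) (𝓝[>] (2 * a - a)) :=
    map_subLeft_nhdsLT.le
  simpa only [two_mul, add_sub_cancel_right] using h

end Reflection

theorem tendsto_div_sub_comp_two_mul_sub {𝕜 : Type*} [Field 𝕜] [TopologicalSpace 𝕜]
    [ContinuousNeg 𝕜] {f : 𝕜 → 𝕜} {a L m : 𝕜} {l l' : Filter 𝕜}
    (hf : Tendsto (fun x => (f x - L) / (x - a)) l (𝓝 m))
    (hl : Tendsto (fun x => 2 * a - x) l' l) :
    Tendsto (fun x => (f (2 * a - x) - L) / (x - a)) l' (𝓝 (-m)) := by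
  refine (hf.comp hl).neg.congr fun x => ?_
  have hsub : 2 * a - x - a = -(x - a) := by ring
  rw [Function.comp_apply, hsub, div_neg, neg_neg]

theorem specA_comm (α β : ℝ) : specA α β = specA β α := by
  simp only [specA, add_comm, mul_comm]

theorem specA_neg_neg (α β : ℝ) : specA (-α) (-β) = -specA α β := by
  simp only [specA, ← neg_add, neg_eq_zero, neg_mul_neg, neg_sq, div_neg, neg_ite, neg_zero]

namespace HasSpecData

variable {f g : ℝ → ℝ} {x₀ L L' α α' β β' : ℝ}

theorem unique (h : HasSpecData f x₀ L α β) (h' : HasSpecData f x₀ L' α' β') :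
    L = L' ∧ α = α' ∧ β = β' := by
  obtain ⟨hL, -, hα, hβ⟩ := h
  obtain ⟨hL', -, hα', hβ'⟩ := h'
  obtain rfl : L = L' := tendsto_nhds_unique hL hL'
  exact ⟨rfl, tendsto_nhds_unique hα hα', tendsto_nhds_unique hβ hβ'⟩

theorem congr (h : HasSpecData f x₀ L α β) (hfg : f =ᶠ[𝓝[≠] x₀] g) :
    HasSpecData g x₀ L α β := by
  obtain ⟨hleft, hright, hα, hβ⟩ := h
  have hlt : f =ᶠ[𝓝[<] x₀] g := hfg.filter_mono (nhdsLT_le_nhdsNE x₀)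
  have hgt : f =ᶠ[𝓝[>] x₀] g := hfg.filter_mono (nhdsGT_le_nhdsNE x₀)
  exact ⟨hleft.congr' hlt, hright.congr' hgt,
    hα.congr' (hgt.mono fun x hx => by simp only [hx]),
    hβ.congr' (hlt.mono fun x hx => by simp only [hx])⟩

theorem comp_two_mul_sub (h : HasSpecData f x₀ L α β) :
    HasSpecData (fun x => f (2 * x₀ - x)) x₀ L (-β) (-α) := by
  obtain ⟨hleft, hright, hα, hβ⟩ := h
  have hlt := tendsto_two_mul_sub_nhdsLT x₀
  have hgt := tendsto_two_mul_sub_nhdsGT x₀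
  exact ⟨hright.comp hlt, hleft.comp hgt, tendsto_div_sub_comp_two_mul_sub hβ hgt,
    tendsto_div_sub_comp_two_mul_sub hα hlt⟩

end HasSpecData

namespace HasSpecDerivAt

variable {f g : ℝ → ℝ} {x₀ d d' : ℝ}

theorem unique (h : HasSpecDerivAt f x₀ d) (h' : HasSpecDerivAt f x₀ d') : d = d' := by
  obtain ⟨L, α, β, hdata, rfl⟩ := h
  obtain ⟨L', α', β', hdata', rfl⟩ := h'
  obtain ⟨-, rfl, rfl⟩ := hdata.unique hdata'
  rfl

theorem congr (h : HasSpecDerivAt f x₀ d) (hfg : f =ᶠ[𝓝[≠] x₀] g) :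
    HasSpecDerivAt g x₀ d := by
  obtain ⟨L, α, β, hdata, hd⟩ := h
  exact ⟨L, α, β, hdata.congr hfg, hd⟩

theorem comp_two_mul_sub (h : HasSpecDerivAt f x₀ d) :
    HasSpecDerivAt (fun x => f (2 * x₀ - x)) x₀ (-d) := by
  obtain ⟨L, α, β, hdata, rfl⟩ := h
  exact ⟨L, -β, -α, hdata.comp_two_mul_sub, by rw [specA_neg_neg, specA_comm]⟩

end HasSpecDerivAt

theorem specular_deriv_of_symmetric (f : ℝ → ℝ) (x₀ d : ℝ)
    (hd : HasSpecDerivAt f x₀ d) (δ : ℝ) (hδ : 0 < δ)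
    (hsym : ∀ x ∈ Set.Ioo (-δ) δ, f (x₀ - x) = f (x₀ + x)) :
    d = 0 := by
  have hrefl : (fun x => f (2 * x₀ - x)) =ᶠ[𝓝 x₀] f := by
    filter_upwards [Ioo_mem_nhds (sub_lt_self x₀ hδ) (lt_add_of_pos_right x₀ hδ)] with x hx
    have hx' : x - x₀ ∈ Ioo (-δ) δ := ⟨by linarith [hx.1], by linarith [hx.2]⟩
    calc f (2 * x₀ - x) = f (x₀ - (x - x₀)) := by ring_nf
      _ = f (x₀ + (x - x₀)) := hsym _ hx'
      _ = f x := by rw [add_sub_cancel]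
  have hneg : HasSpecDerivAt f x₀ (-d) :=
    hd.comp_two_mul_sub.congr (hrefl.filter_mono nhdsWithin_le_nhds)
  exact self_eq_neg.mp (hd.unique hneg)
end

section
/- Let f : ℝ → ℝ be specularly differentiable at every point of an open interval (a, b), with f continuous on (a, b) and the function x ↦ f^S(x) continuous on (a, b). Then for every x ∈ (a, b), f is differentiable at x and f'(x) = f^S(x). -/
open Filter Topology Set

/-!
The number `specA α β` is the slope of the bisector of the lines of slopes `α` and `β`:
it is the tangent of the mean of the angles `arctan α` and `arctan β`, so it lies between `α` and
`β`.  Hence `m < specA α β` forces `m < α` or `m < β`.  This is enough for a mean value inequality: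
if `f x - m * x` dropped below a level `k` strictly between its values at two points, then at the
point where it first does so both one-sided slopes of `f` would be at most `m`.  Near a point where
the specular derivative is continuous, this inequality squeezes the difference quotients of `f`.
-/

-- At multiples of `π / 2` both sides are `0`, by the convention `x / 0 = 0`.
theorem tan_eq_one_sub_cos_two_mul_div_sin_two_mul (θ : ℝ) :
    Real.tan θ = (1 - Real.cos (2 * θ)) / Real.sin (2 * θ) := by
  rw [Real.tan_eq_sin_div_cos, Real.sin_two_mul, Real.cos_two_mul, Real.cos_sq']
  rcases eq_or_ne (Real.sin θ) 0 with hsin | hsin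
  · simp [hsin]
  · field_simp
    ring

theorem specA_eq_tan (α β : ℝ) :
    specA α β = Real.tan ((Real.arctan α + Real.arctan β) / 2) := by
  unfold specA
  split_ifs with h
  · rw [eq_neg_of_add_eq_zero_left h, Real.arctan_neg, neg_add_cancel, zero_div, Real.tan_zero]
  set θ := (Real.arctan α + Real.arctan β) / 2
  have hsum : Real.arctan α + Real.arctan β = 2 * θ := by ring
  have hprod : √((α ^ 2 + 1) * (β ^ 2 + 1)) = √(1 + α ^ 2) * √(1 + β ^ 2) := by
    rw [Real.sqrt_mul (by positivity), add_comm, add_comm (β ^ 2)]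
  have hsin : Real.sin (2 * θ) = (α + β) / (√(1 + α ^ 2) * √(1 + β ^ 2)) := by
    rw [← hsum, Real.sin_add]
    simp only [Real.sin_arctan, Real.cos_arctan]
    field_simp
  have hcos : Real.cos (2 * θ) = (1 - α * β) / (√(1 + α ^ 2) * √(1 + β ^ 2)) := by
    rw [← hsum, Real.cos_add]
    simp only [Real.sin_arctan, Real.cos_arctan]
    field_simp
  rw [tan_eq_one_sub_cos_two_mul_div_sin_two_mul, hprod, hsin, hcos]
  field_simp
  ring

theorem specA_le_max (α β : ℝ) : specA α β ≤ max α β := by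
  have hα := Real.arctan_strictMono.monotone (le_max_left α β)
  have hβ := Real.arctan_strictMono.monotone (le_max_right α β)
  have hmax := Real.arctan_mem_Ioo (max α β)
  have hlt : -(Real.pi / 2) < (Real.arctan α + Real.arctan β) / 2 := by
    linarith [Real.neg_pi_div_two_lt_arctan α, Real.neg_pi_div_two_lt_arctan β]
  have hle : (Real.arctan α + Real.arctan β) / 2 ≤ Real.arctan (max α β) := by linarith
  calc specA α β = Real.tan ((Real.arctan α + Real.arctan β) / 2) := specA_eq_tan α β
    _ ≤ Real.tan (Real.arctan (max α β)) :=
        Real.strictMonoOn_tan.monotoneOn ⟨hlt, hle.trans_lt hmax.2⟩ hmax hle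
    _ = max α β := Real.tan_arctan _

section HasSpecDerivAt

variable {f : ℝ → ℝ} {x d : ℝ}

theorem HasSpecDerivAt.neg (h : HasSpecDerivAt f x d) : HasSpecDerivAt (-f) x (-d) := by
  obtain ⟨L, α, β, ⟨hleft, hright, hα, hβ⟩, rfl⟩ := h
  refine ⟨-L, -α, -β, ⟨hleft.neg, hright.neg, hα.neg.congr fun y => ?_, hβ.neg.congr fun y => ?_⟩,
    (specA_neg_neg α β).symm⟩ <;>
  · rw [Pi.neg_apply]
    ring

theorem HasSpecDerivAt.exists_hasDerivWithinAt (h : HasSpecDerivAt f x d)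
    (hf : ContinuousAt f x) :
    ∃ α β, HasDerivWithinAt f α (Ioi x) x ∧ HasDerivWithinAt f β (Iio x) x ∧ d = specA α β := by
  obtain ⟨L, α, β, ⟨hleft, -, hα, hβ⟩, hd⟩ := h
  obtain rfl : L = f x := tendsto_nhds_unique hleft (hf.tendsto.mono_left nhdsWithin_le_nhds)
  refine ⟨α, β, ?_, ?_, hd⟩
  · rw [hasDerivWithinAt_iff_tendsto_slope' self_notMem_Ioi, slope_fun_def_field]
    exact hα
  · rw [hasDerivWithinAt_iff_tendsto_slope' self_notMem_Iio, slope_fun_def_field]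
    exact hβ

end HasSpecDerivAt

section OneSidedSlopes

variable {f : ℝ → ℝ} {f' x : ℝ}

theorem eventually_nhdsGT_lt_of_hasDerivWithinAt_pos (hf : HasDerivWithinAt f f' (Ioi x) x)
    (hf' : 0 < f') : ∀ᶠ y in 𝓝[>] x, f x < f y := by
  rw [hasDerivWithinAt_iff_tendsto_slope' self_notMem_Ioi] at hf
  filter_upwards [hf.eventually_const_lt hf', self_mem_nhdsWithin] with y hy hxy
  exact (slope_pos_iff_of_le (le_of_lt hxy)).1 hy

theorem eventually_nhdsLT_lt_of_hasDerivWithinAt_pos (hf : HasDerivWithinAt f f' (Iio x) x)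
    (hf' : 0 < f') : ∀ᶠ y in 𝓝[<] x, f y < f x := by
  rw [hasDerivWithinAt_iff_tendsto_slope' self_notMem_Iio] at hf
  filter_upwards [hf.eventually_const_lt hf', self_mem_nhdsWithin] with y hy hyx
  rw [slope_comm] at hy
  exact (slope_pos_iff_of_le (le_of_lt hyx)).1 hy

end OneSidedSlopes

theorem le_of_eventually_nhdsGT_le_or_frequently_nhdsLT_lt {X Y : Type*}
    [ConditionallyCompleteLinearOrder X] [DenselyOrdered X] [TopologicalSpace X] [OrderTopology X]
    [LinearOrder Y] [DenselyOrdered Y] [TopologicalSpace Y] [OrderClosedTopology Y]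
    {f : X → Y} {a b : X} (hab : a ≤ b) (hf : ContinuousOn f (Icc a b))
    (hlocal : ∀ x ∈ Ioo a b, (∀ᶠ y in 𝓝[>] x, f x ≤ f y) ∨ ∃ᶠ y in 𝓝[<] x, f y < f x) :
    f a ≤ f b := by
  by_contra! hlt
  obtain ⟨k, hbk, hka⟩ := exists_between hlt
  set S : Set X := {x ∈ Icc a b | f x < k}
  have hS : S.Nonempty := ⟨b, right_mem_Icc.2 hab, hbk⟩
  obtain ⟨c, hc⟩ : ∃ c, IsGLB S c := ⟨sInf S, isGLB_csInf hS ⟨a, fun x hx => hx.1.1⟩⟩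
  have hcab : c ∈ Icc a b := ⟨hc.2 fun x hx => hx.1.1, hc.1 ⟨right_mem_Icc.2 hab, hbk⟩⟩
  have hbefore : ∀ x ∈ Ico a c, k ≤ f x := fun x hx => not_lt.1 fun hxk =>
    hx.2.not_ge (hc.1 ⟨⟨hx.1, hx.2.le.trans hcab.2⟩, hxk⟩)
  have hck : f c ≤ k :=
    ((hf c hcab).mono fun x hx => hx.1).closure_le (hc.mem_closure hS)
      continuousWithinAt_const fun x hx => hx.2.le
  have hac : a < c := hcab.1.lt_of_ne (by rintro rfl; exact hka.not_ge hck)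
  have hkc : k ≤ f c :=
    continuousWithinAt_const.closure_le
      (by rw [closure_Ico hac.ne]; exact right_mem_Icc.2 hac.le)
      ((hf c hcab).mono fun x hx => ⟨hx.1, hx.2.le.trans hcab.2⟩) hbefore
  have hcb : c < b := hcab.2.lt_of_ne (by rintro rfl; exact hbk.not_ge hkc)
  rcases hlocal c ⟨hac, hcb⟩ with hright | hleft
  · have hafter : ∀ᶠ y in 𝓝[≥] c, f c ≤ f y := by
      rw [← Ioi_insert, nhdsWithin_insert]
      exact ⟨le_rfl, hright⟩
    obtain ⟨y, hyS, hy⟩ := ((hc.frequently_mem hS).and_eventually hafter).exists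
    exact (hyS.2.trans_le hkc).not_ge hy
  · obtain ⟨y, hyc, hy⟩ := (hleft.and_eventually (Ico_mem_nhdsLT hac)).exists
    exact (hyc.trans_le hck).not_ge (hbefore y hy)

section MeanValue

variable {f g : ℝ → ℝ} {a b m : ℝ}

theorem mul_sub_le_image_sub_of_lt_specDeriv (hab : a ≤ b) (hf : ContinuousOn f (Icc a b))
    (hspec : ∀ x ∈ Ioo a b, HasSpecDerivAt f x (g x)) (hm : ∀ x ∈ Ioo a b, m < g x) :
    m * (b - a) ≤ f b - f a := by
  suffices h : f a - m * a ≤ f b - m * b by linarith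
  refine le_of_eventually_nhdsGT_le_or_frequently_nhdsLT_lt (f := fun x => f x - m * x) hab
    (by fun_prop) fun x hx => ?_
  obtain ⟨α, β, hα, hβ, hg⟩ := (hspec x hx).exists_hasDerivWithinAt
    (hf.continuousAt (Icc_mem_nhds hx.1 hx.2))
  have hlinear (s : Set ℝ) : HasDerivWithinAt (fun y => m * y) m s x := by
    simpa using (hasDerivWithinAt_id x s).const_mul m
  rcases lt_max_iff.1 ((hm x hx).trans_le (hg.trans_le (specA_le_max α β))) with hmα | hmβ
  · left
    exact (eventually_nhdsGT_lt_of_hasDerivWithinAt_pos (hα.sub (hlinear _))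
      (sub_pos.2 hmα)).mono fun y hy => hy.le
  · right
    exact (eventually_nhdsLT_lt_of_hasDerivWithinAt_pos (hβ.sub (hlinear _))
      (sub_pos.2 hmβ)).frequently

theorem mul_sub_le_image_sub_of_le_specDeriv (hab : a ≤ b) (hf : ContinuousOn f (Icc a b))
    (hspec : ∀ x ∈ Ioo a b, HasSpecDerivAt f x (g x)) (hm : ∀ x ∈ Ioo a b, m ≤ g x) :
    m * (b - a) ≤ f b - f a := by
  rcases hab.eq_or_lt with rfl | hlt
  · simp
  rw [← le_div_iff₀ (sub_pos.2 hlt)]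
  refine le_of_forall_lt_imp_le_of_dense fun m' hm' => ?_
  rw [le_div_iff₀ (sub_pos.2 hlt)]
  exact mul_sub_le_image_sub_of_lt_specDeriv hab hf hspec fun x hx => hm'.trans_le (hm x hx)

theorem image_sub_le_mul_sub_of_specDeriv_le (hab : a ≤ b) (hf : ContinuousOn f (Icc a b))
    (hspec : ∀ x ∈ Ioo a b, HasSpecDerivAt f x (g x)) (hm : ∀ x ∈ Ioo a b, g x ≤ m) :
    f b - f a ≤ m * (b - a) := by
  have h : -m * (b - a) ≤ (-f) b - (-f) a :=
    mul_sub_le_image_sub_of_le_specDeriv hab hf.neg (fun x hx => (hspec x hx).neg)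
      fun x hx => neg_le_neg (hm x hx)
  simp only [Pi.neg_apply] at h
  linarith

theorem abs_image_sub_sub_mul_le_of_abs_specDeriv_sub_le {s : Set ℝ} {c ε x y : ℝ}
    (hs : s.OrdConnected) (hf : ContinuousOn f s) (hspec : ∀ z ∈ s, HasSpecDerivAt f z (g z))
    (hg : ∀ z ∈ s, |g z - c| ≤ ε) (hx : x ∈ s) (hy : y ∈ s) :
    |f y - f x - c * (y - x)| ≤ ε * |y - x| := by
  wlog hxy : x ≤ y generalizing x y
  · convert this hy hx (le_of_not_ge hxy) using 1
    · rw [← abs_neg]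
      ring_nf
    · rw [abs_sub_comm]
  have hIcc : Icc x y ⊆ s := hs.out hx hy
  have hIoo : Ioo x y ⊆ s := Ioo_subset_Icc_self.trans hIcc
  have hlower : (c - ε) * (y - x) ≤ f y - f x :=
    mul_sub_le_image_sub_of_le_specDeriv hxy (hf.mono hIcc) (fun z hz => hspec z (hIoo hz))
      fun z hz => by linarith [(abs_le.1 (hg z (hIoo hz))).1]
  have hupper : f y - f x ≤ (c + ε) * (y - x) :=
    image_sub_le_mul_sub_of_specDeriv_le hxy (hf.mono hIcc) (fun z hz => hspec z (hIoo hz))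
      fun z hz => by linarith [(abs_le.1 (hg z (hIoo hz))).2]
  rw [abs_of_nonneg (sub_nonneg.2 hxy), abs_le]
  constructor <;> linarith

end MeanValue

theorem deriv_eq_specular_of_continuous_general {f g : ℝ → ℝ} {x : ℝ}
    (hcont : ∀ᶠ y in 𝓝 x, ContinuousAt f y) (hspec : ∀ᶠ y in 𝓝 x, HasSpecDerivAt f y (g y))
    (hg : ContinuousAt g x) : HasStrictDerivAt f (g x) x := by
  rw [hasStrictDerivAt_iff_hasStrictFDerivAt, hasStrictFDerivAt_iff_isLittleO,
    Asymptotics.isLittleO_iff]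
  intro ε hε
  have hclose : ∀ᶠ y in 𝓝 x, |g y - g x| < ε := hg.eventually (Metric.ball_mem_nhds (g x) hε)
  obtain ⟨δ, hδ, hball⟩ := Metric.eventually_nhds_iff_ball.1 (hcont.and (hspec.and hclose))
  filter_upwards [prod_mem_nhds (Metric.ball_mem_nhds x hδ) (Metric.ball_mem_nhds x hδ)]
    with p hp
  rw [ContinuousLinearMap.toSpanSingleton_apply, smul_eq_mul, mul_comm (p.1 - p.2)]
  exact abs_image_sub_sub_mul_le_of_abs_specDeriv_sub_le
    (convex_ball x δ).ordConnected (fun y hy => (hball y hy).1.continuousWithinAt)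
    (fun y hy => (hball y hy).2.1) (fun y hy => (hball y hy).2.2.le) hp.2 hp.1

theorem deriv_eq_specular_of_continuous (f g : ℝ → ℝ) (a b : ℝ)
    (hcont : ContinuousOn f (Set.Ioo a b))
    (hspec : ∀ x ∈ Set.Ioo a b, HasSpecDerivAt f x (g x))
    (hg : ContinuousOn g (Set.Ioo a b)) :
    ∀ x ∈ Set.Ioo a b, HasDerivAt f (g x) x := by
  intro x hx
  have hIoo : Ioo a b ∈ 𝓝 x := isOpen_Ioo.mem_nhds hx
  exact (deriv_eq_specular_of_continuous_general
    (mem_of_superset hIoo fun y hy => hcont.continuousAt (isOpen_Ioo.mem_nhds hy))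
    (mem_of_superset hIoo hspec) (hg.continuousAt hIoo)).hasDerivAt
end
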